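/- Let F be a Minkowski norm on ℝⁿ and Ω ⊆ ℝⁿ open. Let p_k be a sequence with p_k > 1 and p_k → 1, and let u_k be locally Lipschitz functions on Ω, each of which minimizes the functional J^{p_k} in the sense that for every precompact K ⊂ Ω and every locally Lipschitz φ with φ = u_k on Ω∖K, ∫_K ((1/p_k)·F(∇u_k)^{p_k} + u_k·F(∇u_k)^{p_k}) dx ≤ ∫_K ((1/p_k)·F(∇φ)^{p_k} + φ·F(∇u_k)^{p_k}) dx. Assume F(∇u_k) ≤ C almost everywhere for a constant C independent of k, and that u_k converges locally uniformly to a locally Lipschitz function u. Then for every nonnegative cutoff function η ∈ C_c^∞(Ω): limsup_{k→∞} ∫_Ω η·F(∇u_k)^{p_k} dx ≤ ∫_Ω η·F(∇u) dx. -/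

import Mathlib

open MeasureTheory Filter Topology Metric Set
open scoped RealInnerProductSpace NNReal

noncomputable section

abbrev En (n : ℕ) := EuclideanSpace ℝ (Fin n)

/-- A Minkowski norm on ℝⁿ: a norm (convex, even, 1-homogeneous, positive away from 0)
which is smooth away from the origin and whose Hessian of `F²/2` is positive definite
on `ℝⁿ \ {0}`. -/
structure MinkowskiNorm (n : ℕ) where
  F : En n → ℝ
  convexOn : ConvexOn ℝ Set.univ F
  even : ∀ ξ, F (-ξ) = F ξ
  homog : ∀ c : ℝ, 0 ≤ c → ∀ ξ, F (c • ξ) = c * F ξ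
  pos : ∀ ξ : En n, ξ ≠ 0 → 0 < F ξ
  smooth : ContDiffOn ℝ (⊤ : ℕ∞) F {(0 : En n)}ᶜ
  elliptic : ∀ ξ : En n, ξ ≠ 0 → ∀ v : En n, v ≠ 0 →
    0 < fderiv ℝ (fun x => fderiv ℝ (fun y => F y ^ 2 / 2) x) ξ v v

/-- Locally Lipschitz on a set (i.e. `C^{0,1}_loc`). -/
def LocLipOn {n : ℕ} (f : En n → ℝ) (s : Set (En n)) : Prop :=
  ∀ x ∈ s, ∃ (K : ℝ≥0) (t : Set (En n)), t ∈ nhdsWithin x s ∧ LipschitzOnWith K f t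

/-- Weak solution of `div(F_ξ(∇u)) = F(∇u)` in `Ω` in the sense of Huisken–Ilmanen's
minimization principle. -/
def IsWeakSolIAMCF {n : ℕ} (N : MinkowskiNorm n) (Ω : Set (En n)) (u : En n → ℝ) : Prop :=
  LocLipOn u Ω ∧
  ∀ K : Set (En n), IsCompact (closure K) → closure K ⊆ Ω →
    ∀ φ : En n → ℝ, LocLipOn φ Ω → (∀ x ∈ Ω \ K, φ x = u x) →
      (∫ x in K, (N.F (gradient u x) + u x * N.F (gradient u x))) ≤
        ∫ x in K, (N.F (gradient φ x) + φ x * N.F (gradient u x))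

/-- Weak subsolution: the minimization inequality holds for competitors `φ ≤ u`. -/
def IsWeakSubSolIAMCF {n : ℕ} (N : MinkowskiNorm n) (Ω : Set (En n)) (u : En n → ℝ) : Prop :=
  LocLipOn u Ω ∧
  ∀ K : Set (En n), IsCompact (closure K) → closure K ⊆ Ω →
    ∀ φ : En n → ℝ, LocLipOn φ Ω → (∀ x ∈ Ω \ K, φ x = u x) → (∀ x ∈ Ω, φ x ≤ u x) →
      (∫ x in K, (N.F (gradient u x) + u x * N.F (gradient u x))) ≤
        ∫ x in K, (N.F (gradient φ x) + φ x * N.F (gradient u x))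

/-- Weak supersolution: the minimization inequality holds for competitors `φ ≥ u`. -/
def IsWeakSuperSolIAMCF {n : ℕ} (N : MinkowskiNorm n) (Ω : Set (En n)) (u : En n → ℝ) : Prop :=
  LocLipOn u Ω ∧
  ∀ K : Set (En n), IsCompact (closure K) → closure K ⊆ Ω →
    ∀ φ : En n → ℝ, LocLipOn φ Ω → (∀ x ∈ Ω \ K, φ x = u x) → (∀ x ∈ Ω, u x ≤ φ x) →
      (∫ x in K, (N.F (gradient u x) + u x * N.F (gradient u x))) ≤
        ∫ x in K, (N.F (gradient φ x) + φ x * N.F (gradient u x))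

/-- A smooth compactly supported test function on `Ω`. -/
def IsTestFun {n : ℕ} (Ω : Set (En n)) (ψ : En n → ℝ) : Prop :=
  ContDiff ℝ (⊤ : ℕ∞) ψ ∧ HasCompactSupport ψ ∧ tsupport ψ ⊆ Ω

/-- Weak solution of the Finsler `p`-Laplace equation `div(F(∇v)^{p-1} F_ξ(∇v)) = 0` in `Ω`. -/
def IsWeakPHarmonic {n : ℕ} (N : MinkowskiNorm n) (Ω : Set (En n)) (p : ℝ)
    (v : En n → ℝ) : Prop :=
  ∀ ψ : En n → ℝ, IsTestFun Ω ψ →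
    (∫ x in Ω, N.F (gradient v x) ^ (p - 1) *
      ⟪gradient N.F (gradient v x), gradient ψ x⟫) = 0

/-- Weak solution of `div(F(∇u)^{p-1} F_ξ(∇u)) = F(∇u)^p` in `Ω`. -/
def IsWeakPSol {n : ℕ} (N : MinkowskiNorm n) (Ω : Set (En n)) (p : ℝ)
    (u : En n → ℝ) : Prop :=
  ∀ ψ : En n → ℝ, IsTestFun Ω ψ →
    (∫ x in Ω, N.F (gradient u x) ^ (p - 1) *
      ⟪gradient N.F (gradient u x), gradient ψ x⟫) =
      - ∫ x in Ω, N.F (gradient u x) ^ p * ψ x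

/-- The polar (dual) norm `F^o(x) = sup_{ξ ≠ 0} ⟨ξ, x⟩ / F(ξ)`. -/
def polarF {n : ℕ} (N : MinkowskiNorm n) (x : En n) : ℝ :=
  sSup {c : ℝ | ∃ ξ : En n, ξ ≠ 0 ∧ c = ⟪ξ, x⟫ / N.F ξ}

/-- The Wulff shape of radius `r` centered at `x₀`: `{x : F^o(x - x₀) < r}`. -/
def Wulff {n : ℕ} (N : MinkowskiNorm n) (r : ℝ) (x₀ : En n) : Set (En n) :=
  {x | polarF N (x - x₀) < r}

/-- `Ω` is an open set with smooth boundary: it is a smooth sublevel set of a smooth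
function with nonvanishing gradient on the boundary. -/
def HasSmoothBoundary {n : ℕ} (Ω : Set (En n)) : Prop :=
  ∃ f : En n → ℝ, ContDiff ℝ (⊤ : ℕ∞) f ∧ Ω = {x | f x < 0} ∧
    ∀ x ∈ frontier Ω, fderiv ℝ f x ≠ 0

/-- `C¹` on `s` with locally Hölder continuous gradient (i.e. `C^{1,α}_loc`). -/
def C1LocHolderOn {n : ℕ} (v : En n → ℝ) (s : Set (En n)) : Prop :=
  ContDiffOn ℝ 1 v s ∧
  ∀ x ∈ s, ∃ (α C : ℝ≥0), 0 < α ∧ (α : ℝ) ≤ 1 ∧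
    ∃ t ∈ nhdsWithin x s, HolderOnWith C α (fun y => gradient v y) t

/-- Divergence of a vector field on `ℝⁿ`. -/
def divg {n : ℕ} (V : En n → En n) (x : En n) : ℝ :=
  ∑ i : Fin n, fderiv ℝ V x (EuclideanSpace.single i 1) i

/-! With `F` acting on differentials, test minimality of `u_k` against `u_k + θ (u - u_k)`, where
`θ` is `η` rescaled to take values in `[0, 1]`. Its differential is the convex combination
`θ du + (1 - θ) du_k` plus the error `(u - u_k) dθ`, so convexity of `t ↦ t ^ p_k` cancels the
`1 - θ` part and leaves `∫ θ F(du_k) ^ p_k ≤ ∫ θ F(du) ^ p_k + O(sup |u - u_k|)`, with a constant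
that stays bounded as `p_k → 1`. -/

section RealInequalities

theorem add_rpow_le_rpow_add_mul_rpow_sub_one {a b p : ℝ} (ha : 0 ≤ a) (hb : 0 ≤ b) (hp : 1 ≤ p) :
    (a + b) ^ p ≤ a ^ p + p * (a + b) ^ (p - 1) * b := by
  rcases hb.eq_or_lt with rfl | hb
  · simp
  · have hslope := (convexOn_rpow hp).slope_le_of_hasDerivAt (mem_Ici.2 ha)
      (mem_Ici.2 (add_nonneg ha hb.le)) (lt_add_of_pos_right a hb)
      (Real.hasDerivAt_rpow_const (Or.inr hp))
    rw [slope_def_field, add_sub_cancel_left, div_le_iff₀ hb] at hslope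
    linarith

theorem rpow_le_convexCombination_rpow_add {a A B L θ e p : ℝ} (hp : 1 ≤ p) (ha : 0 ≤ a)
    (hA : A ∈ Icc 0 L) (hB : B ∈ Icc 0 L) (hθ : θ ∈ Icc (0 : ℝ) 1) (he : 0 ≤ e)
    (h : a ≤ θ * A + (1 - θ) * B + e) :
    a ^ p ≤ θ * A ^ p + (1 - θ) * B ^ p + p * (L + e) ^ (p - 1) * e := by
  have hθ' : 0 ≤ 1 - θ := sub_nonneg.2 hθ.2
  have hm : θ * A + (1 - θ) * B ∈ Icc 0 L :=
    convex_Icc 0 L hA hB hθ.1 hθ' (add_sub_cancel θ 1)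
  have hconv : (θ * A + (1 - θ) * B) ^ p ≤ θ * A ^ p + (1 - θ) * B ^ p :=
    (convexOn_rpow hp).2 hA.1 hB.1 hθ.1 hθ' (add_sub_cancel θ 1)
  calc a ^ p ≤ (θ * A + (1 - θ) * B + e) ^ p := by gcongr
    _ ≤ (θ * A + (1 - θ) * B) ^ p + p * (θ * A + (1 - θ) * B + e) ^ (p - 1) * e :=
      add_rpow_le_rpow_add_mul_rpow_sub_one hm.1 he hp
    _ ≤ θ * A ^ p + (1 - θ) * B ^ p + p * (L + e) ^ (p - 1) * e := by
      have := hm.1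
      have := hm.2
      gcongr

/-- In the application `A`, `B`, `a` and `g` are the values of `F` at `dw`, `dv`, `dφ` and `dθ`,
where `φ = v + θ d` and `d = w - v`. -/
theorem rpow_add_mul_rpow_le_convexCombination_rpow_add {a A B g d L G θ δ p : ℝ} (hp : 1 ≤ p)
    (ha : 0 ≤ a) (hA : A ∈ Icc 0 L) (hB : B ∈ Icc 0 L) (hg : g ∈ Icc 0 G)
    (hθ : θ ∈ Icc (0 : ℝ) 1) (hd : |d| ≤ δ) (hδ : δ ≤ 1)
    (h : a ≤ θ * A + (1 - θ) * B + |d| * g) :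
    a ^ p + p * (θ * d * B ^ p) ≤
      θ * A ^ p + (1 - θ) * B ^ p + δ * (p * (L + G) ^ p) := by
  have hL : 0 ≤ L := hA.1.trans hA.2
  have hG : 0 ≤ G := hg.1.trans hg.2
  have hδ0 : 0 ≤ δ := (abs_nonneg d).trans hd
  have he0 : 0 ≤ |d| * g := mul_nonneg (abs_nonneg d) hg.1
  have he : |d| * g ≤ δ * G := mul_le_mul hd hg.2 hg.1 hδ0
  have he1 : |d| * g ≤ G := he.trans (mul_le_of_le_one_left hG hδ)
  have hgradient : p * (L + |d| * g) ^ (p - 1) * (|d| * g) ≤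
      p * (L + G) ^ (p - 1) * (δ * G) := by
    gcongr
  have hB_rpow : B ^ p ≤ (L + G) ^ (p - 1) * L := by
    calc B ^ p = B ^ (p - 1) * B := by
          rw [← Real.rpow_add_one' hB.1 (by linarith), sub_add_cancel]
      _ ≤ (L + G) ^ (p - 1) * L := by
          have := hB.1
          have := hB.2
          gcongr
          linarith
  have hθd : θ * d ≤ δ := by
    calc θ * d ≤ θ * |d| := mul_le_mul_of_nonneg_left (le_abs_self d) hθ.1
      _ ≤ |d| := mul_le_of_le_one_left (abs_nonneg d) hθ.2
      _ ≤ δ := hd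
  have hvalue : p * (θ * d * B ^ p) ≤ p * (δ * ((L + G) ^ (p - 1) * L)) :=
    mul_le_mul_of_nonneg_left
      (mul_le_mul hθd hB_rpow (Real.rpow_nonneg hB.1 p) hδ0) (by linarith)
  have hsplit : (L + G) ^ p = (L + G) ^ (p - 1) * (L + G) := by
    rw [← Real.rpow_add_one' (by positivity) (by linarith), sub_add_cancel]
  have hconv := rpow_le_convexCombination_rpow_add hp ha hA hB hθ he0 h
  rw [hsplit]
  linarith

end RealInequalities

section Limits

variable {ι : Type*} {l : Filter ι}

theorem limsup_le_of_eventually_le_add_mul [l.NeBot] {a b c : ι → ℝ} {B C : ℝ}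
    (ha : l.IsCoboundedUnder (· ≤ ·) a) (hb : Tendsto b l (𝓝 B)) (hc : Tendsto c l (𝓝 C))
    (h : ∀ᶠ δ in 𝓝[>] (0 : ℝ), ∀ᶠ k in l, a k ≤ b k + δ * c k) : limsup a l ≤ B := by
  have hδ : ∀ᶠ δ in 𝓝[>] (0 : ℝ), limsup a l ≤ B + δ * C := h.mono fun δ hle => by
    have hlim : Tendsto (fun k => b k + δ * c k) l (𝓝 (B + δ * C)) := hb.add (hc.const_mul δ)
    exact (limsup_le_limsup hle ha hlim.isBoundedUnder_le).trans_eq hlim.limsup_eq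
  have hlim : Tendsto (fun δ => B + δ * C) (𝓝[>] 0) (𝓝 B) :=
    (Continuous.tendsto' (by fun_prop) 0 B (by simp)).mono_left nhdsWithin_le_nhds
  exact ge_of_tendsto hlim hδ

theorem tendsto_integral_mul_rpow [l.IsCountablyGenerated] {α : Type*} [MeasurableSpace α]
    {μ : Measure α} {f g : α → ℝ} (hg : Integrable g μ) (hf : AEMeasurable f μ)
    (hf0 : ∀ᵐ x ∂μ, 0 ≤ f x) {L : ℝ} (hfL : ∀ᵐ x ∂μ, f x ≤ L) {p : ι → ℝ} {q : ℝ} (hq : 0 < q)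
    (hp : Tendsto p l (𝓝 q)) :
    Tendsto (fun k => ∫ x, g x * f x ^ p k ∂μ) l (𝓝 (∫ x, g x * f x ^ q ∂μ)) := by
  refine tendsto_integral_filter_of_dominated_convergence
    (fun x => ‖g x‖ * max L 1 ^ (q + 1))
    (Eventually.of_forall fun k => hg.1.mul (hf.pow_const (p k)).aestronglyMeasurable) ?_
    (hg.norm.mul_const _) (Eventually.of_forall fun x => ?_)
  · filter_upwards [hp.eventually (Ioo_mem_nhds hq (lt_add_one q))] with k hk
    filter_upwards [hf0, hfL] with x hx0 hxL
    rw [norm_mul, Real.norm_of_nonneg (Real.rpow_nonneg hx0 _)]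
    gcongr
    calc f x ^ p k ≤ max L 1 ^ p k :=
          Real.rpow_le_rpow hx0 (hxL.trans (le_max_left L 1)) hk.1.le
      _ ≤ max L 1 ^ (q + 1) := Real.rpow_le_rpow_of_exponent_le (le_max_right L 1) hk.2.le
  · exact ((Real.continuousAt_const_rpow' hq.ne').tendsto.comp hp).const_mul (g x)

end Limits

theorem locallyLipschitzOn_mul {X : Type*} [PseudoEMetricSpace X] {s : Set X} {f g : X → ℝ}
    (hf : LocallyLipschitzOn s f) (hg : LocallyLipschitzOn s g) :
    LocallyLipschitzOn s (f * g) := by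
  intro x hx
  have hmul : LocallyLipschitz fun q : ℝ × ℝ => q.1 * q.2 :=
    ContDiff.locallyLipschitz (𝕂 := ℝ) (by fun_prop)
  obtain ⟨C, t, ht, hC⟩ := hmul (f x, g x)
  obtain ⟨Cf, sf, hsf, hCf⟩ := hf hx
  obtain ⟨Cg, sg, hsg, hCg⟩ := hg hx
  have hpre : (fun y => (f y, g y)) ⁻¹' t ∈ 𝓝[s] x :=
    ((hf.continuousOn x hx).prodMk (hg.continuousOn x hx)) ht
  refine ⟨C * max Cf Cg, sf ∩ sg ∩ (fun y => (f y, g y)) ⁻¹' t,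
    inter_mem (inter_mem hsf hsg) hpre, ?_⟩
  exact hC.comp (((hCf.mono inter_subset_left).prodMk (hCg.mono inter_subset_right)).mono
    inter_subset_left) fun y hy => hy.2

section Differentials

variable {E : Type*} [NormedAddCommGroup E] [NormedSpace ℝ E]

theorem fderiv_add_mul_sub {v w θ : E → ℝ} {x : E} (hv : DifferentiableAt ℝ v x)
    (hw : DifferentiableAt ℝ w x) (hθ : DifferentiableAt ℝ θ x) :
    fderiv ℝ (v + θ * (w - v)) x =
      θ x • fderiv ℝ w x + (1 - θ x) • fderiv ℝ v x + (w x - v x) • fderiv ℝ θ x := by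
  rw [(hv.hasFDerivAt.add (hθ.hasFDerivAt.mul (hw.hasFDerivAt.sub hv.hasFDerivAt))).fderiv]
  simp only [Pi.sub_apply]
  module

theorem seminorm_fderiv_add_mul_sub_le (F : Seminorm ℝ (StrongDual ℝ E)) {v w θ : E → ℝ} {x : E}
    (hv : DifferentiableAt ℝ v x) (hw : DifferentiableAt ℝ w x) (hθ : DifferentiableAt ℝ θ x)
    (hθx : θ x ∈ Icc (0 : ℝ) 1) :
    F (fderiv ℝ (v + θ * (w - v)) x) ≤
      θ x * F (fderiv ℝ w x) + (1 - θ x) * F (fderiv ℝ v x) + |w x - v x| * F (fderiv ℝ θ x) := by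
  rw [fderiv_add_mul_sub hv hw hθ]
  refine (map_add_le_add F _ _).trans (add_le_add_left (map_add_le_add F _ _) _) |>.trans_eq ?_
  simp only [map_smul_eq_mul, Real.norm_eq_abs, abs_of_nonneg hθx.1,
    abs_of_nonneg (sub_nonneg.2 hθx.2)]

theorem seminorm_fderiv_rpow_add_mul_le (F : Seminorm ℝ (StrongDual ℝ E)) {v w θ : E → ℝ} {x : E}
    {p L G δ : ℝ} (hp : 1 ≤ p) (hv : DifferentiableAt ℝ v x) (hw : DifferentiableAt ℝ w x)
    (hθ : DifferentiableAt ℝ θ x) (hθx : θ x ∈ Icc (0 : ℝ) 1) (hvL : F (fderiv ℝ v x) ≤ L)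
    (hwL : F (fderiv ℝ w x) ≤ L) (hθG : F (fderiv ℝ θ x) ≤ G) (hwv : |w x - v x| ≤ δ)
    (hδ : δ ≤ 1) :
    F (fderiv ℝ (v + θ * (w - v)) x) ^ p +
        p * (((v + θ * (w - v)) x - v x) * F (fderiv ℝ v x) ^ p) ≤
      θ x * F (fderiv ℝ w x) ^ p + (F (fderiv ℝ v x) ^ p - θ x * F (fderiv ℝ v x) ^ p) +
        δ * (p * (L + G) ^ p) := by
  have hle := rpow_add_mul_rpow_le_convexCombination_rpow_add hp (apply_nonneg F _)
    ⟨apply_nonneg F _, hwL⟩ ⟨apply_nonneg F _, hvL⟩ ⟨apply_nonneg F _, hθG⟩ hθx hwv hδ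
    (seminorm_fderiv_add_mul_sub_le F hv hw hθ hθx)
  rw [sub_mul, one_mul] at hle
  simpa only [Pi.add_apply, Pi.mul_apply, Pi.sub_apply, add_sub_cancel_left] using hle

variable [FiniteDimensional ℝ E]

theorem continuous_seminorm_of_finiteDimensional (F : Seminorm ℝ E) : Continuous F :=
  F.convexOn.locallyLipschitz.continuous

variable {Ω K : Set E} {f : E → ℝ}

theorem exists_mem_nhdsSet_lipschitzOnWith (hΩ : IsOpen Ω) (hK : IsCompact K) (hKΩ : K ⊆ Ω)
    (hf : LocallyLipschitzOn Ω f) : ∃ C, ∃ s ∈ 𝓝ˢ K, LipschitzOnWith C f s := by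
  obtain ⟨s, hs, hKs, hsΩ⟩ := exists_compact_between hK hΩ hKΩ
  obtain ⟨C, hC⟩ := (hf.mono hsΩ).exists_lipschitzOnWith_of_compact hs
  exact ⟨C, s, subset_interior_iff_mem_nhdsSet.1 hKs, hC⟩

theorem exists_seminorm_fderiv_le (F : Seminorm ℝ (StrongDual ℝ E)) (hΩ : IsOpen Ω)
    (hK : IsCompact K) (hKΩ : K ⊆ Ω) (hf : LocallyLipschitzOn Ω f) :
    ∃ L, ∀ x ∈ K, F (fderiv ℝ f x) ≤ L := by
  obtain ⟨C, s, hs, hC⟩ := exists_mem_nhdsSet_lipschitzOnWith hΩ hK hKΩ hf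
  obtain ⟨B, hB, hFB⟩ :=
    F.bound_of_continuous_normedSpace (continuous_seminorm_of_finiteDimensional F)
  refine ⟨B * C, fun x hx => (hFB _).trans ?_⟩
  gcongr
  exact norm_fderiv_le_of_lipschitzOn ℝ (mem_nhdsSet_iff_forall.1 hs x hx) hC

variable [MeasurableSpace E] [BorelSpace E] {μ : Measure E}

theorem ae_restrict_differentiableAt [μ.IsAddHaarMeasure] (hΩ : IsOpen Ω) (hK : IsCompact K)
    (hKΩ : K ⊆ Ω) (hf : LocallyLipschitzOn Ω f) :
    ∀ᵐ x ∂μ.restrict K, DifferentiableAt ℝ f x := by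
  obtain ⟨C, s, hs, hC⟩ := exists_mem_nhdsSet_lipschitzOnWith hΩ hK hKΩ hf
  rw [ae_restrict_iff' hK.measurableSet]
  filter_upwards [hC.ae_differentiableWithinAt_of_mem (μ := μ)] with x hx hxK
  have hsx : s ∈ 𝓝 x := mem_nhdsSet_iff_forall.1 hs x hxK
  exact (hx (mem_of_mem_nhds hsx)).differentiableAt hsx

theorem measurable_seminorm_fderiv (F : Seminorm ℝ (StrongDual ℝ E)) (f : E → ℝ) :
    Measurable fun x => F (fderiv ℝ f x) :=
  (continuous_seminorm_of_finiteDimensional F).measurable.comp (measurable_fderiv ℝ f)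

theorem integrableOn_seminorm_fderiv_rpow [IsFiniteMeasureOnCompacts μ]
    (F : Seminorm ℝ (StrongDual ℝ E)) (hΩ : IsOpen Ω) (hK : IsCompact K) (hKΩ : K ⊆ Ω)
    (hf : LocallyLipschitzOn Ω f) {p : ℝ} (hp : 0 ≤ p) :
    IntegrableOn (fun x => F (fderiv ℝ f x) ^ p) K μ := by
  obtain ⟨L, hL⟩ := exists_seminorm_fderiv_le F hΩ hK hKΩ hf
  refine Measure.integrableOn_of_bounded (M := L ^ p) hK.measure_lt_top.ne
    ((measurable_seminorm_fderiv F f).pow_const p).aestronglyMeasurable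
    (ae_restrict_of_forall_mem hK.measurableSet fun x hx => ?_)
  rw [Real.norm_of_nonneg (Real.rpow_nonneg (apply_nonneg F _) p)]
  exact Real.rpow_le_rpow (apply_nonneg F _) (hL x hx) hp

end Differentials

section Minimizers

variable {E : Type*} [NormedAddCommGroup E] [NormedSpace ℝ E] [MeasurableSpace E]

/-- Minimizers of the Huisken–Ilmanen type functional
`J^p_u(φ) = ∫ (1 / p) F(dφ) ^ p + φ F(du) ^ p`: the function `u` is compared with locally Lipschitz
competitors `φ` that agree with it off a precompact subset of `Ω`. The seminorm `F` acts on
differentials, so that no inner product is needed to speak of gradients. -/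
structure IsPMinimizer (μ : Measure E) (F : Seminorm ℝ (StrongDual ℝ E)) (p : ℝ) (Ω : Set E)
    (u : E → ℝ) : Prop where
  locallyLipschitzOn : LocallyLipschitzOn Ω u
  setIntegral_le : ∀ K : Set E, IsCompact (closure K) → closure K ⊆ Ω →
    ∀ φ : E → ℝ, LocallyLipschitzOn Ω φ → (∀ x ∈ Ω \ K, φ x = u x) →
      ∫ x in K, ((1 / p) * F (fderiv ℝ u x) ^ p + u x * F (fderiv ℝ u x) ^ p) ∂μ ≤
        ∫ x in K, ((1 / p) * F (fderiv ℝ φ x) ^ p + φ x * F (fderiv ℝ u x) ^ p) ∂μ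

namespace IsPMinimizer

variable [FiniteDimensional ℝ E] [BorelSpace E] {μ : Measure E}
  {F : Seminorm ℝ (StrongDual ℝ E)} {p : ℝ} {Ω K : Set E} {v : E → ℝ}

theorem setIntegral_rpow_le [IsFiniteMeasureOnCompacts μ] (hv : IsPMinimizer μ F p Ω v)
    (hp : 0 < p) (hΩ : IsOpen Ω) (hK : IsCompact K) (hKΩ : K ⊆ Ω) {φ : E → ℝ}
    (hφ : LocallyLipschitzOn Ω φ) (hφv : ∀ x ∈ Ω \ K, φ x = v x) :
    ∫ x in K, F (fderiv ℝ v x) ^ p ∂μ ≤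
      ∫ x in K, (F (fderiv ℝ φ x) ^ p + p * ((φ x - v x) * F (fderiv ℝ v x) ^ p)) ∂μ := by
  have hmin := hv.setIntegral_le K (by rwa [hK.isClosed.closure_eq])
    (by rwa [hK.isClosed.closure_eq]) φ hφ hφv
  have hint_v := integrableOn_seminorm_fderiv_rpow (μ := μ) F hΩ hK hKΩ hv.locallyLipschitzOn hp.le
  have hint_φ := integrableOn_seminorm_fderiv_rpow (μ := μ) F hΩ hK hKΩ hφ hp.le
  have hint_vv := hint_v.continuousOn_mul (hv.locallyLipschitzOn.continuousOn.mono hKΩ) hK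
  have hint_φv := hint_v.continuousOn_mul (hφ.continuousOn.mono hKΩ) hK
  have hint_diff : IntegrableOn
      (fun x => φ x * F (fderiv ℝ v x) ^ p - v x * F (fderiv ℝ v x) ^ p) K μ :=
    hint_φv.sub hint_vv
  simp only [sub_mul]
  rw [integral_add hint_φ (hint_diff.const_mul p), integral_const_mul,
    integral_sub hint_φv hint_vv]
  rw [integral_add (hint_v.const_mul _) hint_vv, integral_add (hint_φ.const_mul _) hint_φv,
    integral_const_mul, integral_const_mul] at hmin
  have hscaled := mul_le_mul_of_nonneg_left hmin hp.le
  simp only [mul_add, ← mul_assoc, mul_one_div_cancel hp.ne', one_mul] at hscaled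
  linarith

variable [μ.IsAddHaarMeasure]

theorem setIntegral_cutoff_mul_rpow_le (hv : IsPMinimizer μ F p Ω v) (hp : 1 ≤ p)
    (hΩ : IsOpen Ω) (hK : IsCompact K) (hKΩ : K ⊆ Ω) {w θ : E → ℝ}
    (hw : LocallyLipschitzOn Ω w) (hθ : LocallyLipschitzOn Ω θ) (hθ01 : ∀ x, θ x ∈ Icc (0 : ℝ) 1)
    (hθK : ∀ x ∉ K, θ x = 0) {L G δ : ℝ} (hvL : ∀ᵐ x ∂μ.restrict K, F (fderiv ℝ v x) ≤ L)
    (hwL : ∀ x ∈ K, F (fderiv ℝ w x) ≤ L) (hθG : ∀ x ∈ K, F (fderiv ℝ θ x) ≤ G)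
    (hwv : ∀ x ∈ K, |w x - v x| ≤ δ) (hδ : δ ≤ 1) :
    ∫ x in K, θ x * F (fderiv ℝ v x) ^ p ∂μ ≤
      ∫ x in K, θ x * F (fderiv ℝ w x) ^ p ∂μ + δ * (p * (L + G) ^ p) * μ.real K := by
  have hv_lip := hv.locallyLipschitzOn
  have hp0 : 0 < p := one_pos.trans_le hp
  have hφ_lip : LocallyLipschitzOn Ω (v + θ * (w - v)) :=
    hv_lip.add (locallyLipschitzOn_mul hθ (hw.sub hv_lip))
  have hθK_cont : ContinuousOn θ K := hθ.continuousOn.mono hKΩ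
  have h_int {f : E → ℝ} (hf : LocallyLipschitzOn Ω f) :=
    integrableOn_seminorm_fderiv_rpow (μ := μ) F hΩ hK hKΩ hf hp0.le
  have hint_θv := (h_int hv_lip).continuousOn_mul hθK_cont hK
  have hint_θw := (h_int hw).continuousOn_mul hθK_cont hK
  have hint_diff : IntegrableOn
      (fun x => F (fderiv ℝ v x) ^ p - θ x * F (fderiv ℝ v x) ^ p) K μ :=
    (h_int hv_lip).sub hint_θv
  have hint_sum : IntegrableOn (fun x => θ x * F (fderiv ℝ w x) ^ p +
      (F (fderiv ℝ v x) ^ p - θ x * F (fderiv ℝ v x) ^ p)) K μ := hint_θw.add hint_diff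
  have hint_const : IntegrableOn (fun _ => δ * (p * (L + G) ^ p)) K μ :=
    integrableOn_const hK.measure_lt_top.ne
  have hmin := hv.setIntegral_rpow_le hp0 hΩ hK hKΩ hφ_lip fun x hx => by simp [hθK x hx.2]
  have hcompare : ∫ x in K, F (fderiv ℝ v x) ^ p ∂μ ≤
      ∫ x in K, (θ x * F (fderiv ℝ w x) ^ p +
        (F (fderiv ℝ v x) ^ p - θ x * F (fderiv ℝ v x) ^ p) + δ * (p * (L + G) ^ p)) ∂μ := by
    refine hmin.trans (integral_mono_ae ((h_int hφ_lip).add (((h_int hv_lip).continuousOn_mul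
      ((hφ_lip.sub hv_lip).continuousOn.mono hKΩ) hK).const_mul p))
      (hint_sum.add hint_const) ?_)
    filter_upwards [ae_restrict_differentiableAt hΩ hK hKΩ hv_lip,
      ae_restrict_differentiableAt hΩ hK hKΩ hw, ae_restrict_differentiableAt hΩ hK hKΩ hθ,
      hvL, ae_restrict_mem hK.measurableSet] with x hdv hdw hdθ hvLx hx
    exact seminorm_fderiv_rpow_add_mul_le F hp hdv hdw hdθ (hθ01 x) hvLx (hwL x hx) (hθG x hx)
      (hwv x hx) hδ
  rw [integral_add hint_sum hint_const, integral_add hint_θw hint_diff,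
    integral_sub (h_int hv_lip) hint_θv, setIntegral_const, smul_eq_mul] at hcompare
  linarith

theorem exists_forall_setIntegral_mul_rpow_le (μ : Measure E) [μ.IsAddHaarMeasure]
    (F : Seminorm ℝ (StrongDual ℝ E)) (hΩ : IsOpen Ω) (hK : IsCompact K)
    (hKΩ : K ⊆ Ω) {w η : E → ℝ} (hw : LocallyLipschitzOn Ω w) (hη : LocallyLipschitzOn Ω η)
    (hη0 : ∀ x, 0 ≤ η x) (hηK : ∀ x ∉ K, η x = 0) (C : ℝ) :
    ∃ D R : ℝ, ∀ p : ℝ, 1 ≤ p → ∀ v : E → ℝ, IsPMinimizer μ F p Ω v →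
      (∀ᵐ x ∂μ.restrict K, F (fderiv ℝ v x) ≤ C) →
      ∀ δ ≤ 1, (∀ x ∈ K, |w x - v x| ≤ δ) →
        ∫ x in K, η x * F (fderiv ℝ v x) ^ p ∂μ ≤
          ∫ x in K, η x * F (fderiv ℝ w x) ^ p ∂μ + δ * (D * (p * R ^ p)) := by
  obtain ⟨M, hM, hηM⟩ : ∃ M : ℝ, 0 < M ∧ ∀ x, η x ≤ M := by
    obtain ⟨M, hM⟩ := hK.exists_bound_of_continuousOn (hη.continuousOn.mono hKΩ)
    refine ⟨max M 1, by positivity, fun x => ?_⟩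
    by_cases hx : x ∈ K
    · exact (le_abs_self _).trans ((hM x hx).trans (le_max_left M 1))
    · rw [hηK x hx]
      positivity
  have hθ : LocallyLipschitzOn Ω fun x => M⁻¹ * η x :=
    locallyLipschitzOn_mul (LipschitzWith.const M⁻¹).locallyLipschitz.locallyLipschitzOn hη
  have hθ01 : ∀ x, M⁻¹ * η x ∈ Icc (0 : ℝ) 1 := fun x =>
    ⟨mul_nonneg (inv_nonneg.2 hM.le) (hη0 x), (inv_mul_le_one₀ hM).2 (hηM x)⟩
  obtain ⟨Lw, hLw⟩ := exists_seminorm_fderiv_le F hΩ hK hKΩ hw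
  obtain ⟨G, hG⟩ := exists_seminorm_fderiv_le F hΩ hK hKΩ hθ
  refine ⟨M * μ.real K, max C Lw + G, fun p hp v hv hvC δ hδ hwv => ?_⟩
  have hcutoff := hv.setIntegral_cutoff_mul_rpow_le hp hΩ hK hKΩ hw hθ hθ01
    (fun x hx => by rw [hηK x hx, mul_zero]) (hvC.mono fun x hx => hx.trans (le_max_left C Lw))
    (fun x hx => (hLw x hx).trans (le_max_right C Lw)) hG hwv hδ
  simp only [mul_assoc, integral_const_mul] at hcutoff
  rw [inv_mul_le_iff₀ hM, mul_add, mul_inv_cancel_left₀ hM.ne'] at hcutoff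
  linarith

end IsPMinimizer

end Minimizers

theorem statement15_general {E : Type*} [NormedAddCommGroup E] [NormedSpace ℝ E]
    [FiniteDimensional ℝ E] [MeasurableSpace E] [BorelSpace E] (μ : Measure E)
    [μ.IsAddHaarMeasure] (F : Seminorm ℝ (StrongDual ℝ E)) {Ω : Set E} (hΩ : IsOpen Ω)
    {ι : Type*} {l : Filter ι} [l.NeBot] [l.IsCountablyGenerated] {p : ι → ℝ}
    (hp : ∀ k, 1 ≤ p k) (hplim : Tendsto p l (𝓝 1)) {u : ι → E → ℝ}
    (hu : ∀ k, IsPMinimizer μ F (p k) Ω (u k)) {C : ℝ}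
    (hC : ∀ k, ∀ᵐ x ∂μ, x ∈ Ω → F (fderiv ℝ (u k) x) ≤ C) {w : E → ℝ}
    (hw : LocallyLipschitzOn Ω w) (hconv : TendstoLocallyUniformlyOn u w l Ω) {η : E → ℝ}
    (hη : LocallyLipschitzOn Ω η) (hηc : HasCompactSupport η) (hηΩ : tsupport η ⊆ Ω)
    (hη0 : ∀ x, 0 ≤ η x) :
    limsup (fun k => ∫ x in Ω, η x * F (fderiv ℝ (u k) x) ^ p k ∂μ) l ≤
      ∫ x in Ω, η x * F (fderiv ℝ w x) ∂μ := by
  have hK : IsCompact (tsupport η) := hηc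
  have hη_zero : ∀ x ∉ tsupport η, η x = 0 := fun x => image_eq_zero_of_notMem_tsupport
  have hintegral (g : E → ℝ) : ∫ x in Ω, η x * g x ∂μ = ∫ x in tsupport η, η x * g x ∂μ :=
    setIntegral_eq_of_subset_of_forall_sdiff_eq_zero hΩ.measurableSet hηΩ
      fun x hx => by rw [hη_zero x hx.2, zero_mul]
  simp only [hintegral]
  obtain ⟨L, hL⟩ := exists_seminorm_fderiv_le F hΩ hK hηΩ hw
  obtain ⟨D, R, hcompare⟩ := IsPMinimizer.exists_forall_setIntegral_mul_rpow_le μ F hΩ hK hηΩ hw hη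
    hη0 hη_zero C
  have hη_int := (hη.continuousOn.mono hηΩ).integrableOn_compact (μ := μ) hK
  have hrhs := tendsto_integral_mul_rpow hη_int
    (measurable_seminorm_fderiv F w).aemeasurable (ae_of_all _ fun x => apply_nonneg F _)
    (ae_restrict_of_forall_mem hK.measurableSet hL) one_pos hplim
  simp only [Real.rpow_one] at hrhs
  have herror : Tendsto (fun k => D * (p k * R ^ p k)) l (𝓝 (D * (1 * R ^ (1 : ℝ)))) :=
    (hplim.mul ((Real.continuousAt_const_rpow' one_ne_zero).tendsto.comp hplim)).const_mul D
  have hunif := (tendstoLocallyUniformlyOn_iff_tendstoUniformlyOn_of_compact hK).1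
    (hconv.mono hηΩ)
  refine limsup_le_of_eventually_le_add_mul ?_ hrhs herror ?_
  · exact IsBoundedUnder.isCoboundedUnder_le ⟨0, eventually_map.2 <| Eventually.of_forall fun k =>
      integral_nonneg fun x => mul_nonneg (hη0 x) (Real.rpow_nonneg (apply_nonneg F _) _)⟩
  · filter_upwards [Ioc_mem_nhdsGT one_pos] with δ hδ
    filter_upwards [Metric.tendstoUniformlyOn_iff.1 hunif δ hδ.1] with k hk
    exact hcompare (p k) (hp k) (u k) (hu k)
      ((ae_restrict_iff' hK.measurableSet).2 ((hC k).mono fun x hx hxK => hx (hηΩ hxK)))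
      δ hδ.2 fun x hx => (hk x hx).le

namespace MinkowskiNorm

theorem map_add_le {n : ℕ} (N : MinkowskiNorm n) (ξ ζ : En n) : N.F (ξ + ζ) ≤ N.F ξ + N.F ζ := by
  have hmid := N.convexOn.2 (mem_univ ξ) (mem_univ ζ) (by norm_num : (0 : ℝ) ≤ 1 / 2)
    (by norm_num : (0 : ℝ) ≤ 1 / 2) (by norm_num)
  rw [← smul_add, N.homog _ (by norm_num)] at hmid
  simp only [smul_eq_mul] at hmid
  linarith

theorem map_smul {n : ℕ} (N : MinkowskiNorm n) (c : ℝ) (ξ : En n) :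
    N.F (c • ξ) = ‖c‖ * N.F ξ := by
  rcases le_total 0 c with hc | hc
  · rw [N.homog c hc, Real.norm_of_nonneg hc]
  · rw [← N.even, ← neg_smul, N.homog _ (neg_nonneg.2 hc), Real.norm_of_nonpos hc]

/-- The Minkowski norm as a seminorm on differentials, `ℝⁿ` being identified with its dual by the
inner product, so that its value at `fderiv ℝ u x` is by definition `N.F (gradient u x)`. -/
def dualSeminorm {n : ℕ} (N : MinkowskiNorm n) : Seminorm ℝ (StrongDual ℝ (En n)) :=
  (Seminorm.of N.F N.map_add_le N.map_smul).comp
    (InnerProductSpace.toDual ℝ (En n)).symm.toLinearEquiv.toLinearMap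

end MinkowskiNorm

/-- If `p_k → 1`, `u_k` minimize the functionals `J^{p_k}`, satisfy a
uniform a.e. gradient bound `F(∇u_k) ≤ C`, and converge locally uniformly to `u`, then
for every nonnegative cutoff `η ∈ C_c^∞(Ω)`,
`limsup_k ∫ η F(∇u_k)^{p_k} ≤ ∫ η F(∇u)`. -/
theorem statement15 (n : ℕ) (N : MinkowskiNorm n)
    (Ω : Set (En n)) (hΩ : IsOpen Ω)
    (p : ℕ → ℝ) (hp : ∀ k, 1 < p k) (hplim : Tendsto p atTop (𝓝 1))
    (u : ℕ → En n → ℝ) (hlip : ∀ k, LocLipOn (u k) Ω)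
    (hmin : ∀ k, ∀ K : Set (En n), IsCompact (closure K) → closure K ⊆ Ω →
      ∀ φ : En n → ℝ, LocLipOn φ Ω → (∀ x ∈ Ω \ K, φ x = u k x) →
        (∫ x in K, ((1 / p k) * N.F (gradient (u k) x) ^ (p k) +
            u k x * N.F (gradient (u k) x) ^ (p k))) ≤
          ∫ x in K, ((1 / p k) * N.F (gradient φ x) ^ (p k) +
            φ x * N.F (gradient (u k) x) ^ (p k)))
    (C : ℝ) (hC : ∀ k, ∀ᵐ x, x ∈ Ω → N.F (gradient (u k) x) ≤ C)
    (ulim : En n → ℝ) (hulim : LocLipOn ulim Ω)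
    (hconv : TendstoLocallyUniformlyOn u ulim atTop Ω)
    (η : En n → ℝ) (hη : IsTestFun Ω η) (hηnn : ∀ x, 0 ≤ η x) :
    limsup (fun k => ∫ x in Ω, η x * N.F (gradient (u k) x) ^ (p k)) atTop ≤
      ∫ x in Ω, η x * N.F (gradient ulim x) :=
  statement15_general volume N.dualSeminorm hΩ (fun k => (hp k).le) hplim
    (fun k => ⟨hlip k, hmin k⟩) hC hulim hconv
    (hη.1.of_le (by simp)).locallyLipschitz.locallyLipschitzOn hη.2.1 hη.2.2 hηnn
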